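/- Let (A, R) be a Rota-Baxter algebra of weight λ over a field K, and let (M, R, T) be a Rota-Baxter paired left A-module of weight λ with underlying action ▷. Define a⋆b = R(a)b + λab − b·R(a) and a▷⋆m = R(a)▷m + a▷T(m) + λ·a▷m. Then (A, ⋆) is a left pre-Lie algebra and (M, ▷⋆) is a left pre-Lie module over (A, ⋆), i.e., a▷⋆(b▷⋆m) − (a⋆b)▷⋆m = b▷⋆(a▷⋆m) − (b⋆a)▷⋆m for all a, b ∈ A and m ∈ M. -/

import Mathlib

/-- `a ⋆ b = R(a)b + λab − b·R(a)`. -/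
def starOp {K A : Type*} [Field K] [NonUnitalRing A] [Module K A]
    [SMulCommClass K A A] [IsScalarTower K A A]
    (R : A →ₗ[K] A) (lam : K) (a b : A) : A :=
  R a * b + lam • (a * b) - b * R a

/-- `a ▷⋆ m = R(a)▷m + a▷T(m) + λ·a▷m`. -/
def actStar {K A M : Type*} [Field K] [NonUnitalRing A] [Module K A]
    [SMulCommClass K A A] [IsScalarTower K A A] [AddCommGroup M] [Module K M]
    (act : A →ₗ[K] M →ₗ[K] M) (R : A →ₗ[K] A) (T : M →ₗ[K] M) (lam : K)
    (a : A) (m : M) : M :=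
  act (R a) m + act a (T m) + lam • act a m

/-- Corollary 3.12: if `(A, R)` is a Rota-Baxter algebra of
weight `λ` and `(M, R, T)` a Rota-Baxter paired left `A`-module of weight `λ`,
then `a ⋆ b = R(a)b + λab − bR(a)` makes `(A, ⋆)` a left pre-Lie algebra and
`a▷⋆m = R(a)▷m + a▷T(m) + λa▷m` makes `(M, ▷⋆)` a left pre-Lie module over it. -/
theorem stmt18 {K A M : Type*} [Field K] [NonUnitalRing A] [Module K A]
    [SMulCommClass K A A] [IsScalarTower K A A] [AddCommGroup M] [Module K M]
    (R : A →ₗ[K] A) (lam : K) (act : A →ₗ[K] M →ₗ[K] M) (T : M →ₗ[K] M)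
    -- Rota-Baxter operator of weight λ
    (hRB : ∀ a b, R a * R b = R (R a * b) + R (a * R b) + lam • R (a * b))
    -- M is a left A-module
    (hMact : ∀ a b m, act (a * b) m = act a (act b m))
    -- Rota-Baxter paired module structure of weight λ
    (hpair : ∀ a m, act (R a) (T m) =
      T (act (R a) m) + T (act a (T m)) + lam • T (act a m)) :
    (∀ a b c, starOp R lam a (starOp R lam b c) - starOp R lam (starOp R lam a b) c =
      starOp R lam b (starOp R lam a c) - starOp R lam (starOp R lam b a) c) ∧
    (∀ a b m,
      actStar act R T lam a (actStar act R T lam b m) -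
        actStar act R T lam (starOp R lam a b) m =
      actStar act R T lam b (actStar act R T lam a m) -
        actStar act R T lam (starOp R lam b a) m) := by
  have h1 : ∀ a b, R (R a * b) = R a * R b - R (a * R b) - lam • R (a * b) := by
    intro a b
    rw [hRB]; abel
  have h2 : ∀ a b, R (starOp R lam a b) = R a * R b - R (a * R b) - R (b * R a) := by
    intro a b
    simp only [starOp, map_add, map_sub, map_smul, h1]; abel
  have h3 : ∀ a m, T (act (R a) m) =
      act (R a) (T m) - T (act a (T m)) - lam • T (act a m) := by
    intro a m
    rw [hpair]; abel
  constructor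
  · intro a b c
    conv_lhs => rw [starOp, starOp.eq_1 R lam (starOp R lam a b), h2]
    conv_rhs => rw [starOp, starOp.eq_1 R lam (starOp R lam b a), h2]
    simp only [starOp, mul_add, add_mul, mul_sub, sub_mul, smul_add, smul_sub,
      mul_smul_comm, smul_mul_assoc, mul_assoc]
    module
  · intro a b m
    simp only [actStar, h2]
    simp only [starOp, map_add, map_sub, map_smul, LinearMap.add_apply, LinearMap.sub_apply,
      LinearMap.smul_apply, hMact, h3]
    module
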